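/- arXiv:1203.0046 — 2 statements merged into one kernel-verified Lean document; each statement's English description precedes it below -/
import Mathlib

section
/- Let u₂ ∈ ℝ and set Y = f + u₂·g on D = {(x₁,x₂) ∈ ℝ² : x₁ > 0}, where f(x₁,x₂) = (x₂, 1/x₁³) and g(x₁,x₂) = (0, −x₁). Define ad⁰Y(g) = g and ad^{m}Y(g) = [Y, ad^{m−1}Y(g)] for m ≥ 1. Then for every integer n ≥ 0 and every point of D: ad^{2n+1}Y(g) = (−4u₂)ⁿ·[f,g] and ad^{2n+2}Y(g) = 2·(−4u₂)ⁿ·(f − u₂·g). -/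
/-- The drift vector field `f(x₁,x₂) = (x₂, 1/x₁³)`. -/
noncomputable def driftField (p : ℝ × ℝ) : ℝ × ℝ := (p.2, 1 / p.1 ^ 3)

/-- The control vector field `g(x₁,x₂) = (0, −x₁)`. -/
noncomputable def controlField (p : ℝ × ℝ) : ℝ × ℝ := (0, -p.1)

/-- The Lie bracket of vector fields `h, k` on `ℝ²`:
`[h,k](x) = Dk(x)·h(x) − Dh(x)·k(x)`. -/
noncomputable def lieBracketVF (h k : ℝ × ℝ → ℝ × ℝ) (p : ℝ × ℝ) : ℝ × ℝ :=
  fderiv ℝ k p (h p) - fderiv ℝ h p (k p)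

/-- The vector field `Y = f + u₂·g`. -/
noncomputable def Yfield (u₂ : ℝ) (p : ℝ × ℝ) : ℝ × ℝ :=
  driftField p + u₂ • controlField p

/-- Iterated adjoint: `ad⁰Y(g) = g`, `adᵐY(g) = [Y, ad^{m−1}Y(g)]`. -/
noncomputable def adYg (u₂ : ℝ) : ℕ → (ℝ × ℝ → ℝ × ℝ)
  | 0 => controlField
  | m + 1 => lieBracketVF (Yfield u₂) (adYg u₂ m)

/-!
The fields `f`, `g` and `h = [f, g]` span a copy of `𝔰𝔩₂`: `[f, h] = 2f` and `[g, h] = -2g`.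
For `Y = f + u g` these relations give `[Y, g] = h`, `[Y, h] = 2(f - u g)` and
`[Y, f - u g] = -2u h`, so `(ad Y)²` acts on `h` as multiplication by `-4u`. The bracket at a
point depends only on germs, so relations that hold on an open set can be iterated there.
-/

open Set VectorField

section Sl2Relations

variable {𝕜 E : Type*} [NontriviallyNormedField 𝕜] [NormedAddCommGroup E] [NormedSpace 𝕜 E]
  {F G V W : E → E} {U : Set E} {x : E}

lemma eqOn_lieBracket_right (hU : IsOpen U) (hVW : EqOn V W U) :
    EqOn (lieBracket 𝕜 F V) (lieBracket 𝕜 F W) U := fun _ hx ↦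
  Filter.EventuallyEq.rfl.lieBracket_vectorField_eq (hVW.eventuallyEq_of_mem (hU.mem_nhds hx))

lemma lieBracket_const_smul_right_field (c : 𝕜) :
    lieBracket 𝕜 V (c • W) = c • lieBracket 𝕜 V W := by
  ext x
  simp [lieBracket, fderiv_const_smul_field, smul_sub]

lemma lieBracket_add_smul_left (hF : DifferentiableAt 𝕜 F x) (hG : DifferentiableAt 𝕜 G x)
    (u : 𝕜) (W : E → E) :
    lieBracket 𝕜 (F + u • G) W x = lieBracket 𝕜 F W x + u • lieBracket 𝕜 G W x := by
  rw [lieBracket_add_left hF (hG.const_smul u), lieBracket_const_smul_left hG]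

lemma lieBracket_add_smul_self (hF : DifferentiableAt 𝕜 F x) (hG : DifferentiableAt 𝕜 G x)
    (u : 𝕜) : lieBracket 𝕜 (F + u • G) G x = lieBracket 𝕜 F G x := by
  simp [lieBracket_add_smul_left hF hG]

lemma lieBracket_add_smul_sub_smul (hF : DifferentiableAt 𝕜 F x) (hG : DifferentiableAt 𝕜 G x)
    (u : 𝕜) :
    lieBracket 𝕜 (F + u • G) (F - u • G) x = (-2 * u) • lieBracket 𝕜 F G x := by
  have hsub : F - u • G = F + (-u) • G := by rw [neg_smul, sub_eq_add_neg]
  rw [hsub, lieBracket_add_right hF (hG.const_smul _), lieBracket_const_smul_right_field,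
    Pi.smul_apply, lieBracket_add_smul_self hF hG, lieBracket_add_smul_left hF hG,
    lieBracket_self, lieBracket_swap (V := G)]
  simp only [Pi.zero_apply]
  module

lemma lieBracket_add_smul_lieBracket (hF : DifferentiableAt 𝕜 F x) (hG : DifferentiableAt 𝕜 G x)
    (hFH : lieBracket 𝕜 F (lieBracket 𝕜 F G) x = (2 : 𝕜) • F x)
    (hGH : lieBracket 𝕜 G (lieBracket 𝕜 F G) x = (-2 : 𝕜) • G x) (u : 𝕜) :
    lieBracket 𝕜 (F + u • G) (lieBracket 𝕜 F G) x = (2 : 𝕜) • (F - u • G) x := by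
  rw [lieBracket_add_smul_left hF hG, hFH, hGH, Pi.sub_apply, Pi.smul_apply]
  module

variable (hU : IsOpen U) (hF : DifferentiableOn 𝕜 F U) (hG : DifferentiableOn 𝕜 G U)
  (hFH : EqOn (lieBracket 𝕜 F (lieBracket 𝕜 F G)) ((2 : 𝕜) • F) U)
  (hGH : EqOn (lieBracket 𝕜 G (lieBracket 𝕜 F G)) ((-2 : 𝕜) • G) U)
include hU hF hG hFH hGH

lemma eqOn_lieBracket_add_smul_of_eqOn_smul (u c : 𝕜)
    (hV : EqOn V (c • lieBracket 𝕜 F G) U) :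
    EqOn (lieBracket 𝕜 (F + u • G) V) ((2 * c) • (F - u • G)) U := by
  intro x hx
  have hFx := hF.differentiableAt (hU.mem_nhds hx)
  have hGx := hG.differentiableAt (hU.mem_nhds hx)
  rw [eqOn_lieBracket_right hU hV hx, lieBracket_const_smul_right_field, Pi.smul_apply,
    lieBracket_add_smul_lieBracket hFx hGx (hFH hx) (hGH hx), smul_smul, mul_comm c, Pi.smul_apply]

theorem iterate_lieBracket_add_smul_odd (u : 𝕜) (n : ℕ) :
    EqOn ((lieBracket 𝕜 (F + u • G))^[2 * n + 1] G) ((-4 * u) ^ n • lieBracket 𝕜 F G) U := by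
  induction n with
  | zero =>
    intro x hx
    simpa using lieBracket_add_smul_self (hF.differentiableAt (hU.mem_nhds hx))
      (hG.differentiableAt (hU.mem_nhds hx)) u
  | succ n ih =>
    intro x hx
    have hFx := hF.differentiableAt (hU.mem_nhds hx)
    have hGx := hG.differentiableAt (hU.mem_nhds hx)
    have heven := eqOn_lieBracket_add_smul_of_eqOn_smul hU hF hG hFH hGH u _ ih
    rw [show 2 * (n + 1) + 1 = 2 * n + 1 + 1 + 1 by ring, Function.iterate_succ_apply',
      Function.iterate_succ_apply', eqOn_lieBracket_right hU heven hx,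
      lieBracket_const_smul_right_field, Pi.smul_apply, lieBracket_add_smul_sub_smul hFx hGx,
      smul_smul, Pi.smul_apply]
    congr 1
    ring

theorem iterate_lieBracket_add_smul_even (u : 𝕜) (n : ℕ) :
    EqOn ((lieBracket 𝕜 (F + u • G))^[2 * n + 2] G)
      ((2 * (-4 * u) ^ n) • (F - u • G)) U := by
  rw [Function.iterate_succ']
  exact eqOn_lieBracket_add_smul_of_eqOn_smul hU hF hG hFH hGH u _
    (iterate_lieBracket_add_smul_odd hU hF hG hFH hGH u n)

end Sl2Relations

open ContinuousLinearMap

/-- The linear saddle `(x₁, -x₂)`: the closed form of the bracket `[f, g]` away from the axis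
`x₁ = 0`, used to differentiate that bracket. -/
def saddleField (p : ℝ × ℝ) : ℝ × ℝ := (p.1, -p.2)

lemma hasFDerivAt_driftField {p : ℝ × ℝ} (hp : p.1 ≠ 0) :
    HasFDerivAt driftField ((snd ℝ ℝ ℝ).prod ((-3 / p.1 ^ 4) • fst ℝ ℝ ℝ)) p := by
  have hcube : HasDerivAt (fun t : ℝ ↦ 1 / t ^ 3) (-3 / p.1 ^ 4) p.1 := by
    simp only [one_div]
    refine ((hasDerivAt_pow 3 p.1).fun_inv (pow_ne_zero 3 hp)).congr_deriv ?_
    push_cast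
    field_simp
  exact hasFDerivAt_snd.prodMk (hcube.comp_hasFDerivAt p hasFDerivAt_fst)

lemma hasFDerivAt_controlField (p : ℝ × ℝ) :
    HasFDerivAt controlField ((0 : ℝ × ℝ →L[ℝ] ℝ).prod (-fst ℝ ℝ ℝ)) p :=
  (hasFDerivAt_const 0 p).prodMk hasFDerivAt_fst.neg

lemma hasFDerivAt_saddleField (p : ℝ × ℝ) :
    HasFDerivAt saddleField ((fst ℝ ℝ ℝ).prod (-snd ℝ ℝ ℝ)) p :=
  hasFDerivAt_fst.prodMk hasFDerivAt_snd.neg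

lemma isOpen_fst_ne_zero : IsOpen {p : ℝ × ℝ | p.1 ≠ 0} :=
  isOpen_ne_fun continuous_fst continuous_const

lemma eqOn_lieBracket_driftField_controlField :
    EqOn (lieBracket ℝ driftField controlField) saddleField {p | p.1 ≠ 0} := by
  intro p hp
  rw [lieBracket, (hasFDerivAt_controlField p).fderiv, (hasFDerivAt_driftField hp).fderiv]
  simp [driftField, controlField, saddleField]

lemma eqOn_lieBracket_driftField_lieBracket :
    EqOn (lieBracket ℝ driftField (lieBracket ℝ driftField controlField))
      ((2 : ℝ) • driftField) {p | p.1 ≠ 0} := by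
  intro p hp
  have hfst : p.1 ≠ 0 := hp
  rw [eqOn_lieBracket_right isOpen_fst_ne_zero eqOn_lieBracket_driftField_controlField hp,
    lieBracket, (hasFDerivAt_saddleField p).fderiv, (hasFDerivAt_driftField hp).fderiv]
  simp only [driftField, saddleField, ContinuousLinearMap.prod_apply, coe_fst', coe_snd',
    neg_apply, smul_apply, smul_eq_mul, Prod.mk_sub_mk, Pi.smul_apply, Prod.smul_mk]
  congr 1
  · ring
  · field_simp
    ring

lemma eqOn_lieBracket_controlField_lieBracket :
    EqOn (lieBracket ℝ controlField (lieBracket ℝ driftField controlField))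
      ((-2 : ℝ) • controlField) {p | p.1 ≠ 0} := by
  intro p hp
  rw [eqOn_lieBracket_right isOpen_fst_ne_zero eqOn_lieBracket_driftField_controlField hp,
    lieBracket, (hasFDerivAt_saddleField p).fderiv, (hasFDerivAt_controlField p).fderiv]
  simp only [controlField, saddleField, ContinuousLinearMap.prod_apply, coe_fst', coe_snd',
    neg_apply, zero_apply, Prod.mk_sub_mk, Pi.smul_apply, Prod.smul_mk, smul_eq_mul]
  congr 1 <;> ring

lemma lieBracketVF_eq_lieBracket : lieBracketVF = lieBracket ℝ := rfl

lemma adYg_eq_iterate_lieBracket (u : ℝ) (m : ℕ) :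
    adYg u m = (lieBracket ℝ (driftField + u • controlField))^[m] controlField := by
  induction m with
  | zero => rfl
  | succ m ih =>
    rw [Function.iterate_succ_apply', ← ih, ← lieBracketVF_eq_lieBracket]
    rfl

theorem adY_powers_general (u₂ : ℝ) (n : ℕ) (p : ℝ × ℝ) (hp : p.1 ≠ 0) :
    adYg u₂ (2 * n + 1) p
      = ((-4 * u₂) ^ n) • lieBracketVF driftField controlField p ∧
    adYg u₂ (2 * n + 2) p
      = (2 * (-4 * u₂) ^ n) • (driftField p - u₂ • controlField p) := by
  have hdrift : DifferentiableOn ℝ driftField {p | p.1 ≠ 0} := fun _ hq ↦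
    (hasFDerivAt_driftField hq).differentiableAt.differentiableWithinAt
  have hcontrol : DifferentiableOn ℝ controlField {p | p.1 ≠ 0} := fun q _ ↦
    (hasFDerivAt_controlField q).differentiableAt.differentiableWithinAt
  rw [lieBracketVF_eq_lieBracket, adYg_eq_iterate_lieBracket, adYg_eq_iterate_lieBracket]
  exact ⟨iterate_lieBracket_add_smul_odd isOpen_fst_ne_zero hdrift hcontrol
      eqOn_lieBracket_driftField_lieBracket eqOn_lieBracket_controlField_lieBracket u₂ n hp,
    iterate_lieBracket_add_smul_even isOpen_fst_ne_zero hdrift hcontrol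
      eqOn_lieBracket_driftField_lieBracket eqOn_lieBracket_controlField_lieBracket u₂ n hp⟩

/-- For `Y = f + u₂ g`, at every point of `D = {x₁ > 0}`:
`ad^{2n+1}Y(g) = (−4u₂)ⁿ [f,g]` and `ad^{2n+2}Y(g) = 2(−4u₂)ⁿ (f − u₂ g)`. -/
theorem adY_powers (u₂ : ℝ) (n : ℕ) (p : ℝ × ℝ) (hp : 0 < p.1) :
    adYg u₂ (2 * n + 1) p
      = ((-4 * u₂) ^ n) • lieBracketVF driftField controlField p ∧
    adYg u₂ (2 * n + 2) p
      = (2 * (-4 * u₂) ^ n) • (driftField p - u₂ • controlField p) :=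
  adY_powers_general u₂ n p hp.ne'
end

section
/- Let u₁ ≥ 1, u₂ ≥ 1 and γ > 1. Set t₁ = (1/√u₁)·arsinh(√(u₁(γ² − 1)(u₂γ² − 1)/(γ²(u₁ + u₂)(u₁ + 1)))) and t₂ = (1/√u₂)·arcsin(√(u₂(γ² − 1)(u₁γ² + 1)/((u₁ + u₂)(u₂γ⁴ − 1)))). Then t₁, t₂ > 0 and there exists a continuous, piecewise continuously differentiable curve (x₁,x₂) : [0, t₁ + t₂] → ℝ² with x₁(t) > 0 for all t, (x₁,x₂)(0) = (1,0), (x₁,x₂)(t₁+t₂) = (γ,0), satisfying ẋ₁ = x₂ on [0, t₁+t₂], ẋ₂ = u₁x₁ + 1/x₁³ on [0, t₁], and ẋ₂ = −u₂x₁ + 1/x₁³ on [t₁, t₁+t₂]. Hence the bang-bang control taking value −u₁ on [0,t₁] and u₂ on [t₁, t₁+t₂] transfers (1,0) to (γ,0) in total time T₀ = t₁ + t₂. -/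
open Real

/-!
If `φ` and `ψ` solve the linear oscillator `z'' = -u z` with Wronskian `1`, then `√(φ² + ψ²)`
solves the Ermakov equation `x'' = -u x + 1 / x³` (Pinney). For `u = -u₁` this gives an explicit arc
leaving `(1, 0)`, and for `u = u₂` one arriving at `(γ, 0)`. Along each arc `x₂² + u x₁² + 1 / x₁²`
is conserved, and the two level curves cross at exactly one value of `x₁²`. The first arc attains
this value at time `t₁` after its start and the second at time `t₂` before its end, both with
`x₂ ≥ 0`, so the velocities agree there too and the arcs can be concatenated.
-/

/-- `z` solves the linear oscillator equation `z'' = -u z` within `s`, with velocity `z'`. -/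
structure IsOscillation (u z z' : ℝ → ℝ) (s : Set ℝ) : Prop where
  hasDerivWithinAt : ∀ t ∈ s, HasDerivWithinAt z (z' t) s t
  hasDerivWithinAt_velocity : ∀ t ∈ s, HasDerivWithinAt z' (-u t * z t) s t

/-- `(x₁, x₂)` solves the system `ẋ₁ = x₂`, `ẋ₂ = -u x₁ + 1 / x₁³` within `s` and stays in the
domain `x₁ > 0`. Derivatives are taken within `s`, hence are one-sided at the endpoints of an
interval. -/
structure IsErmakovTrajectory (u x₁ x₂ : ℝ → ℝ) (s : Set ℝ) : Prop where
  pos : ∀ t ∈ s, 0 < x₁ t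
  hasDerivWithinAt_fst : ∀ t ∈ s, HasDerivWithinAt x₁ (x₂ t) s t
  hasDerivWithinAt_snd : ∀ t ∈ s, HasDerivWithinAt x₂ (-u t * x₁ t + 1 / x₁ t ^ 3) s t

/-- The first integral of the Ermakov system under the constant control `u`, at position `x` and
velocity `v`. -/
noncomputable def ermakovEnergy (u x v : ℝ) : ℝ :=
  v ^ 2 + u * x ^ 2 + 1 / x ^ 2

/-- The value of `x₁²` at which the energy level of `(1, 0)` for the control `-u₁` meets the energy
level of `(γ, 0)` for the control `u₂`. -/
noncomputable def switchingSq (u₁ u₂ γ : ℝ) : ℝ :=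
  (ermakovEnergy u₂ γ 0 - ermakovEnergy (-u₁) 1 0) / (u₁ + u₂)

/-- The value of `sinh² (√u₁ t₁)` for which the arc leaving `(1, 0)` under the control `-u₁` attains
`x₁² = switchingSq u₁ u₂ γ` at time `t₁`. -/
noncomputable def switchingSinhSq (u₁ u₂ γ : ℝ) : ℝ :=
  u₁ * (γ ^ 2 - 1) * (u₂ * γ ^ 2 - 1) / (γ ^ 2 * (u₁ + u₂) * (u₁ + 1))

/-- The value of `sin² (√u₂ t₂)` for which the arc arriving at `(γ, 0)` under the control `u₂` has
`x₁² = switchingSq u₁ u₂ γ` at time `t₂` before its arrival. -/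
noncomputable def switchingSinSq (u₁ u₂ γ : ℝ) : ℝ :=
  u₂ * (γ ^ 2 - 1) * (u₁ * γ ^ 2 + 1) / ((u₁ + u₂) * (u₂ * γ ^ 4 - 1))

/-- The duration `t₁` of the arc leaving `(1, 0)` under the control `-u₁`, up to the switching. -/
noncomputable def departureTime (u₁ u₂ γ : ℝ) : ℝ :=
  1 / √u₁ * arsinh √(switchingSinhSq u₁ u₂ γ)

/-- The duration `t₂` of the arc arriving at `(γ, 0)` under the control `u₂`, from the switching. -/
noncomputable def arrivalTime (u₁ u₂ γ : ℝ) : ℝ :=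
  1 / √u₂ * arcsin √(switchingSinSq u₁ u₂ γ)

section Concatenation

open Set

lemma hasDerivWithinAt_union_of_isClosed {𝕜 F : Type*} [NontriviallyNormedField 𝕜]
    [NormedAddCommGroup F] [NormedSpace 𝕜 F] {f f' : 𝕜 → F} {s t : Set 𝕜} (hs : IsClosed s)
    (ht : IsClosed t) (hfs : ∀ x ∈ s, HasDerivWithinAt f (f' x) s x)
    (hft : ∀ x ∈ t, HasDerivWithinAt f (f' x) t x) :
    ∀ x ∈ s ∪ t, HasDerivWithinAt f (f' x) (s ∪ t) x := by
  have extend {r : Set 𝕜} (hr : IsClosed r) (hfr : ∀ x ∈ r, HasDerivWithinAt f (f' x) r x)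
      (x : 𝕜) : HasDerivWithinAt f (f' x) r x := by
    by_cases hx : x ∈ r
    · exact hfr x hx
    · exact HasFDerivWithinAt.of_notMem_closure (hr.closure_eq.symm ▸ hx)
  exact fun x _ ↦ (extend hs hfs x).union (extend ht hft x)

lemma eqOn_piecewise_Iic_Ici {α β : Type*} [LinearOrder α] {f g : α → β} {b : α} (h : f b = g b) :
    EqOn ((Iic b).piecewise f g) g (Ici b) := by
  intro t ht
  rcases eq_or_lt_of_le ht with rfl | hlt
  · simp [h]
  · simp [hlt]

namespace IsErmakovTrajectory

variable {u v x₁ x₂ y₁ y₂ : ℝ → ℝ} {s t : Set ℝ}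

lemma mono (h : IsErmakovTrajectory u x₁ x₂ s) (hts : t ⊆ s) : IsErmakovTrajectory u x₁ x₂ t where
  pos r hr := h.pos r (hts hr)
  hasDerivWithinAt_fst r hr := (h.hasDerivWithinAt_fst r (hts hr)).mono hts
  hasDerivWithinAt_snd r hr := (h.hasDerivWithinAt_snd r (hts hr)).mono hts

lemma congr (h : IsErmakovTrajectory u x₁ x₂ s) (h₁ : EqOn y₁ x₁ s) (h₂ : EqOn y₂ x₂ s) :
    IsErmakovTrajectory u y₁ y₂ s where
  pos r hr := by rw [h₁ hr]; exact h.pos r hr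
  hasDerivWithinAt_fst r hr := by
    rw [h₂ hr]; exact (h.hasDerivWithinAt_fst r hr).congr_of_mem h₁ hr
  hasDerivWithinAt_snd r hr := by
    rw [h₁ hr]; exact (h.hasDerivWithinAt_snd r hr).congr_of_mem h₂ hr

lemma continuousOn_snd_union (hu : IsErmakovTrajectory u x₁ x₂ s) (hs : IsClosed s)
    (ht : IsClosed t) (hv : IsErmakovTrajectory v x₁ x₂ t) :
    ContinuousOn x₂ (s ∪ t) :=
  ContinuousOn.union_of_isClosed (fun r hr ↦ (hu.hasDerivWithinAt_snd r hr).continuousWithinAt)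
    (fun r hr ↦ (hv.hasDerivWithinAt_snd r hr).continuousWithinAt) hs ht

lemma exists_concat {a b c : ℝ} (hab : a ≤ b) (hbc : b ≤ c)
    (hx : IsErmakovTrajectory u x₁ x₂ (Icc a b)) (hy : IsErmakovTrajectory v y₁ y₂ (Icc b c))
    (h₁ : x₁ b = y₁ b) (h₂ : x₂ b = y₂ b) :
    ∃ z₁ z₂ : ℝ → ℝ,
      IsErmakovTrajectory u z₁ z₂ (Icc a b) ∧ IsErmakovTrajectory v z₁ z₂ (Icc b c) ∧
      z₁ a = x₁ a ∧ z₂ a = x₂ a ∧ z₁ c = y₁ c ∧ z₂ c = y₂ c := by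
  have left (f g : ℝ → ℝ) : EqOn ((Iic b).piecewise f g) f (Icc a b) :=
    (piecewise_eqOn _ f g).mono Icc_subset_Iic_self
  have right {f g : ℝ → ℝ} (h : f b = g b) : EqOn ((Iic b).piecewise f g) g (Icc b c) :=
    (eqOn_piecewise_Iic_Ici h).mono Icc_subset_Ici_self
  have ha : a ∈ Icc a b := left_mem_Icc.2 hab
  have hc : c ∈ Icc b c := right_mem_Icc.2 hbc
  exact ⟨(Iic b).piecewise x₁ y₁, (Iic b).piecewise x₂ y₂,
    hx.congr (left x₁ y₁) (left x₂ y₂), hy.congr (right h₁) (right h₂),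
    left x₁ y₁ ha, left x₂ y₂ ha, right h₁ hc, right h₂ hc⟩

end IsErmakovTrajectory

end Concatenation

section Energy

lemma IsErmakovTrajectory.energy_eq {u : ℝ} {x₁ x₂ : ℝ → ℝ} {s : Set ℝ}
    (h : IsErmakovTrajectory (fun _ ↦ u) x₁ x₂ s) (hs : Convex ℝ s) {t t' : ℝ} (ht : t ∈ s)
    (ht' : t' ∈ s) : ermakovEnergy u (x₁ t) (x₂ t) = ermakovEnergy u (x₁ t') (x₂ t') := by
  have deriv_eq_zero : ∀ r ∈ s,
      HasDerivWithinAt (fun r ↦ ermakovEnergy u (x₁ r) (x₂ r)) 0 s r := by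
    intro r hr
    have hx := h.hasDerivWithinAt_fst r hr
    have hpos := h.pos r hr
    refine ((((h.hasDerivWithinAt_snd r hr).fun_pow 2).fun_add ((hx.fun_pow 2).const_mul u)).fun_add
      ((hasDerivWithinAt_const r s 1).fun_div (hx.fun_pow 2) (by positivity))).congr_deriv ?_
    field_simp
    ring
  have bound := hs.norm_image_sub_le_of_norm_hasDerivWithin_le deriv_eq_zero
    (fun _ _ ↦ norm_zero.le) ht' ht
  exact sub_eq_zero.1 (norm_le_zero_iff.1 (by simpa only [zero_mul] using bound))

lemma eq_of_ermakovEnergy_eq {u₁ u₂ γ x v w : ℝ} (hu : u₁ + u₂ ≠ 0) (hv : 0 ≤ v) (hw : 0 ≤ w)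
    (hx : x ^ 2 = switchingSq u₁ u₂ γ)
    (hEv : ermakovEnergy (-u₁) x v = ermakovEnergy (-u₁) 1 0)
    (hEw : ermakovEnergy u₂ x w = ermakovEnergy u₂ γ 0) : v = w := by
  refine (sq_eq_sq₀ hv hw).1 ?_
  rw [switchingSq, eq_div_iff hu, ← hEv, ← hEw, ermakovEnergy, ermakovEnergy] at hx
  linear_combination hx

end Energy

section Pinney

lemma IsOscillation.isErmakovTrajectory {u φ φ' ψ ψ' : ℝ → ℝ} {s : Set ℝ}
    (hφ : IsOscillation u φ φ' s) (hψ : IsOscillation u ψ ψ' s)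
    (wronskian : ∀ t ∈ s, φ t * ψ' t - φ' t * ψ t = 1) :
    IsErmakovTrajectory u (fun t ↦ √(φ t ^ 2 + ψ t ^ 2))
      (fun t ↦ (φ t * φ' t + ψ t * ψ' t) / √(φ t ^ 2 + ψ t ^ 2)) s := by
  have sq_pos : ∀ t ∈ s, 0 < φ t ^ 2 + ψ t ^ 2 := by
    intro t ht
    refine (add_nonneg (sq_nonneg _) (sq_nonneg _)).lt_of_ne' fun h ↦ ?_
    obtain ⟨hφ0, hψ0⟩ := (add_eq_zero_iff_of_nonneg (sq_nonneg _) (sq_nonneg _)).1 h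
    simpa [sq_eq_zero_iff.1 hφ0, sq_eq_zero_iff.1 hψ0] using wronskian t ht
  have deriv_fst : ∀ t ∈ s, HasDerivWithinAt (fun t ↦ √(φ t ^ 2 + ψ t ^ 2))
      ((φ t * φ' t + ψ t * ψ' t) / √(φ t ^ 2 + ψ t ^ 2)) s t := by
    intro t ht
    have deriv_sq_add_sq :=
      ((hφ.hasDerivWithinAt t ht).fun_pow 2).fun_add ((hψ.hasDerivWithinAt t ht).fun_pow 2)
    refine (deriv_sq_add_sq.sqrt (sq_pos t ht).ne').congr_deriv ?_
    field_simp
    ring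
  refine ⟨fun t ht ↦ sqrt_pos.2 (sq_pos t ht), deriv_fst, fun t ht ↦ ?_⟩
  have hρ : 0 < √(φ t ^ 2 + ψ t ^ 2) := sqrt_pos.2 (sq_pos t ht)
  have hρ_sq : √(φ t ^ 2 + ψ t ^ 2) ^ 2 = φ t ^ 2 + ψ t ^ 2 := sq_sqrt (sq_pos t ht).le
  -- Lagrange's identity turns the squared Wronskian into the numerator of the `1 / x³` term.
  have lagrange : (φ t ^ 2 + ψ t ^ 2) * (φ' t ^ 2 + ψ' t ^ 2)
      - (φ t * φ' t + ψ t * ψ' t) ^ 2 = 1 := by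
    linear_combination (φ t * ψ' t - φ' t * ψ t + 1) * wronskian t ht
  have deriv_numerator :=
    ((hφ.hasDerivWithinAt t ht).fun_mul (hφ.hasDerivWithinAt_velocity t ht)).fun_add
      ((hψ.hasDerivWithinAt t ht).fun_mul (hψ.hasDerivWithinAt_velocity t ht))
  refine (deriv_numerator.fun_div (deriv_fst t ht) hρ.ne').congr_deriv ?_
  generalize √(φ t ^ 2 + ψ t ^ 2) = ρ at hρ hρ_sq ⊢
  rw [← hρ_sq] at lagrange
  field_simp
  linear_combination lagrange + u t * ρ ^ 2 * hρ_sq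

end Pinney

section Oscillations

lemma hasDerivAt_const_mul_sub (ω t₀ t : ℝ) : HasDerivAt (fun s ↦ ω * (s - t₀)) ω t := by
  simpa using ((hasDerivAt_id t).sub_const t₀).const_mul ω

variable (c ω t₀ : ℝ) (s : Set ℝ)

lemma isOscillation_cosh : IsOscillation (fun _ ↦ -ω ^ 2) (fun t ↦ c * cosh (ω * (t - t₀)))
    (fun t ↦ c * ω * sinh (ω * (t - t₀))) s where
  hasDerivWithinAt t _ :=
    (((hasDerivAt_const_mul_sub ω t₀ t).cosh.const_mul c).congr_deriv (by ring)).hasDerivWithinAt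
  hasDerivWithinAt_velocity t _ :=
    (((hasDerivAt_const_mul_sub ω t₀ t).sinh.const_mul (c * ω)).congr_deriv
      (by ring)).hasDerivWithinAt

lemma isOscillation_sinh : IsOscillation (fun _ ↦ -ω ^ 2) (fun t ↦ c * sinh (ω * (t - t₀)))
    (fun t ↦ c * ω * cosh (ω * (t - t₀))) s where
  hasDerivWithinAt t _ :=
    (((hasDerivAt_const_mul_sub ω t₀ t).sinh.const_mul c).congr_deriv (by ring)).hasDerivWithinAt
  hasDerivWithinAt_velocity t _ :=
    (((hasDerivAt_const_mul_sub ω t₀ t).cosh.const_mul (c * ω)).congr_deriv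
      (by ring)).hasDerivWithinAt

lemma isOscillation_cos : IsOscillation (fun _ ↦ ω ^ 2) (fun t ↦ c * cos (ω * (t - t₀)))
    (fun t ↦ -(c * ω) * sin (ω * (t - t₀))) s where
  hasDerivWithinAt t _ :=
    (((hasDerivAt_const_mul_sub ω t₀ t).cos.const_mul c).congr_deriv (by ring)).hasDerivWithinAt
  hasDerivWithinAt_velocity t _ :=
    (((hasDerivAt_const_mul_sub ω t₀ t).sin.const_mul (-(c * ω))).congr_deriv
      (by ring)).hasDerivWithinAt

lemma isOscillation_sin : IsOscillation (fun _ ↦ ω ^ 2) (fun t ↦ c * sin (ω * (t - t₀)))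
    (fun t ↦ c * ω * cos (ω * (t - t₀))) s where
  hasDerivWithinAt t _ :=
    (((hasDerivAt_const_mul_sub ω t₀ t).sin.const_mul c).congr_deriv (by ring)).hasDerivWithinAt
  hasDerivWithinAt_velocity t _ :=
    (((hasDerivAt_const_mul_sub ω t₀ t).cos.const_mul (c * ω)).congr_deriv
      (by ring)).hasDerivWithinAt

end Oscillations

section Arcs

lemma exists_isErmakovTrajectory_departing {u r p t₀ t : ℝ} (hu : 0 < u) (hr : 0 < r) (hp : 0 ≤ p)
    (ht : t - t₀ = 1 / √u * arsinh √p) :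
    ∃ x₁ x₂ : ℝ → ℝ, IsErmakovTrajectory (fun _ ↦ -u) x₁ x₂ Set.univ ∧
      x₁ t₀ = r ∧ x₂ t₀ = 0 ∧ x₁ t ^ 2 = r ^ 2 + (r ^ 2 + 1 / (u * r ^ 2)) * p ∧ 0 ≤ x₂ t := by
  obtain ⟨ω, hω, rfl⟩ : ∃ ω, 0 < ω ∧ ω ^ 2 = u := ⟨√u, sqrt_pos.2 hu, sq_sqrt hu.le⟩
  have hθ : ω * (t - t₀) = arsinh √p := by rw [ht, sqrt_sq hω.le]; field_simp
  refine ⟨_, _, (isOscillation_cosh r ω t₀ _).isErmakovTrajectory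
    (isOscillation_sinh (1 / (ω * r)) ω t₀ _) fun s _ ↦ ?_, ?_, ?_, ?_, ?_⟩
  · field_simp
    exact cosh_sq_sub_sinh_sq _
  · simp [sqrt_sq hr.le]
  · simp
  · rw [sq_sqrt (by positivity), hθ, mul_pow, mul_pow, cosh_sq, sinh_arsinh, sq_sqrt hp]
    field_simp
    ring
  · rw [hθ, sinh_arsinh]
    positivity

lemma exists_isErmakovTrajectory_arriving {u r q t₀ t : ℝ} (hu : 0 < u) (hr : 0 < r)
    (hur : 1 ≤ u * r ^ 4) (hq₀ : 0 ≤ q) (hq₁ : q ≤ 1) (ht : t₀ - t = 1 / √u * arcsin √q) :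
    ∃ x₁ x₂ : ℝ → ℝ, IsErmakovTrajectory (fun _ ↦ u) x₁ x₂ Set.univ ∧
      x₁ t₀ = r ∧ x₂ t₀ = 0 ∧ x₁ t ^ 2 = r ^ 2 - (r ^ 2 - 1 / (u * r ^ 2)) * q ∧ 0 ≤ x₂ t := by
  obtain ⟨ω, hω, rfl⟩ : ∃ ω, 0 < ω ∧ ω ^ 2 = u := ⟨√u, sqrt_pos.2 hu, sq_sqrt hu.le⟩
  have hθ : ω * (t - t₀) = -arcsin √q := by rw [← neg_sub, ht, sqrt_sq hω.le]; field_simp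
  have hsin : sin (arcsin √q) = √q :=
    sin_arcsin ((neg_nonpos.2 zero_le_one).trans (sqrt_nonneg q)) (sqrt_le_one.2 hq₁)
  refine ⟨_, _, (isOscillation_cos r ω t₀ _).isErmakovTrajectory
    (isOscillation_sin (1 / (ω * r)) ω t₀ _) fun s _ ↦ ?_, ?_, ?_, ?_, ?_⟩
  · field_simp
    linear_combination cos_sq_add_sin_sq (ω * (s - t₀))
  · simp [sqrt_sq hr.le]
  · simp
  · rw [sq_sqrt (by positivity), hθ, cos_neg, sin_neg, mul_pow, mul_pow, cos_sq', neg_sq, hsin,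
      sq_sqrt hq₀]
    field_simp
    ring
  · rw [hθ, cos_neg, sin_neg, hsin]
    have hcos : 0 ≤ cos (arcsin √q) := cos_arcsin_nonneg _
    have numerator_eq : r * cos (arcsin √q) * (-(r * ω) * -√q)
        + 1 / (ω * r) * -√q * (1 / (ω * r) * ω * cos (arcsin √q))
        = (ω ^ 2 * r ^ 4 - 1) / (ω * r ^ 2) * (√q * cos (arcsin √q)) := by
      field_simp
      ring
    rw [numerator_eq]
    have : 0 ≤ ω ^ 2 * r ^ 4 - 1 := sub_nonneg.2 hur
    positivity

end Arcs

section Switching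

variable {u₁ u₂ γ : ℝ}

lemma pos_of_one_lt_mul_sq (hu₂γ : 1 < u₂ * γ ^ 2) : 0 < u₂ :=
  pos_of_mul_pos_left (zero_lt_one.trans hu₂γ) (sq_nonneg γ)

lemma one_lt_mul_pow_four (hu₂γ : 1 < u₂ * γ ^ 2) (hγ : 1 < γ) : 1 < u₂ * γ ^ 4 := by
  calc 1 < u₂ * γ ^ 2 * γ ^ 2 := one_lt_mul_of_lt_of_le hu₂γ (one_le_pow₀ hγ.le)
    _ = u₂ * γ ^ 4 := by ring

lemma switchingSinhSq_pos (hu₁ : 0 < u₁) (hu₂γ : 1 < u₂ * γ ^ 2) (hγ : 1 < γ) :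
    0 < switchingSinhSq u₁ u₂ γ := by
  have hu₂ := pos_of_one_lt_mul_sq hu₂γ
  have hγ_sq : 0 < γ ^ 2 - 1 := sub_pos.2 (one_lt_pow₀ hγ two_ne_zero)
  have : 0 < u₂ * γ ^ 2 - 1 := sub_pos.2 hu₂γ
  unfold switchingSinhSq
  positivity

lemma switchingSinSq_pos (hu₁ : 0 < u₁) (hu₂γ : 1 < u₂ * γ ^ 2) (hγ : 1 < γ) :
    0 < switchingSinSq u₁ u₂ γ := by
  have hu₂ := pos_of_one_lt_mul_sq hu₂γ
  have hγ_sq : 0 < γ ^ 2 - 1 := sub_pos.2 (one_lt_pow₀ hγ two_ne_zero)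
  have hu₂γ₄ : 0 < u₂ * γ ^ 4 - 1 := sub_pos.2 (one_lt_mul_pow_four hu₂γ hγ)
  unfold switchingSinSq
  positivity

lemma switchingSinSq_le_one (hu₁ : 0 < u₁) (hu₂γ : 1 < u₂ * γ ^ 2) (hγ : 1 < γ) :
    switchingSinSq u₁ u₂ γ ≤ 1 := by
  have hu₂ := pos_of_one_lt_mul_sq hu₂γ
  have hu₂γ₄ : 0 < u₂ * γ ^ 4 - 1 := sub_pos.2 (one_lt_mul_pow_four hu₂γ hγ)
  have gap_nonneg : 0 ≤ (u₂ * γ ^ 2 - 1) * (u₂ * γ ^ 2 + u₁) :=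
    mul_nonneg (sub_pos.2 hu₂γ).le (by positivity)
  exact (div_le_one (by positivity)).2 (by linear_combination gap_nonneg)

lemma one_add_mul_switchingSinhSq (hu₁ : 0 < u₁) (hu : u₁ + u₂ ≠ 0) (hγ : γ ≠ 0) :
    1 + (1 + 1 / u₁) * switchingSinhSq u₁ u₂ γ = switchingSq u₁ u₂ γ := by
  unfold switchingSinhSq switchingSq ermakovEnergy
  field_simp
  ring

lemma sq_sub_mul_switchingSinSq (hu₂ : u₂ ≠ 0) (hu : u₁ + u₂ ≠ 0) (hγ : γ ≠ 0)
    (h : u₂ * γ ^ 4 - 1 ≠ 0) :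
    γ ^ 2 - (γ ^ 2 - 1 / (u₂ * γ ^ 2)) * switchingSinSq u₁ u₂ γ = switchingSq u₁ u₂ γ := by
  have amplitude_eq : γ ^ 2 - 1 / (u₂ * γ ^ 2) = (u₂ * γ ^ 4 - 1) / (u₂ * γ ^ 2) := by field_simp
  rw [amplitude_eq, switchingSinSq, switchingSq, ermakovEnergy, ermakovEnergy]
  -- `field_simp` would otherwise normalize `u₂ * γ ^ 4 - 1` and no longer recognize `h`.
  generalize u₂ * γ ^ 4 - 1 = d at h ⊢
  field_simp
  ring

lemma departureTime_pos (hu₁ : 0 < u₁) (hu₂γ : 1 < u₂ * γ ^ 2) (hγ : 1 < γ) :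
    0 < departureTime u₁ u₂ γ :=
  mul_pos (one_div_pos.2 (sqrt_pos.2 hu₁))
    (arsinh_pos_iff.2 (sqrt_pos.2 (switchingSinhSq_pos hu₁ hu₂γ hγ)))

lemma arrivalTime_pos (hu₁ : 0 < u₁) (hu₂γ : 1 < u₂ * γ ^ 2) (hγ : 1 < γ) :
    0 < arrivalTime u₁ u₂ γ :=
  mul_pos (one_div_pos.2 (sqrt_pos.2 (pos_of_one_lt_mul_sq hu₂γ)))
    (arcsin_pos.2 (sqrt_pos.2 (switchingSinSq_pos hu₁ hu₂γ hγ)))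

lemma exists_isErmakovTrajectory_switching {t₁ t₂ : ℝ} (hu₁ : 0 < u₁) (hu₂γ : 1 < u₂ * γ ^ 2)
    (hγ : 1 < γ) (ht₁ : t₁ = departureTime u₁ u₂ γ) (ht₂ : t₂ = arrivalTime u₁ u₂ γ) :
    ∃ x₁ x₂ : ℝ → ℝ,
      IsErmakovTrajectory (fun _ ↦ -u₁) x₁ x₂ (Set.Icc 0 t₁) ∧
      IsErmakovTrajectory (fun _ ↦ u₂) x₁ x₂ (Set.Icc t₁ (t₁ + t₂)) ∧
      x₁ 0 = 1 ∧ x₂ 0 = 0 ∧ x₁ (t₁ + t₂) = γ ∧ x₂ (t₁ + t₂) = 0 := by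
  have ht₁_pos : 0 < t₁ := ht₁ ▸ departureTime_pos hu₁ hu₂γ hγ
  have ht₂_pos : 0 < t₂ := ht₂ ▸ arrivalTime_pos hu₁ hu₂γ hγ
  have hγ₀ : 0 < γ := zero_lt_one.trans hγ
  have hu₂ : 0 < u₂ := pos_of_one_lt_mul_sq hu₂γ
  have hu : u₁ + u₂ ≠ 0 := (add_pos hu₁ hu₂).ne'
  have hu₂γ₄ : 1 < u₂ * γ ^ 4 := one_lt_mul_pow_four hu₂γ hγ
  obtain ⟨x₁, x₂, hx, hx₁_start, hx₂_start, hx₁_sq, hx₂_nonneg⟩ :=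
    exists_isErmakovTrajectory_departing hu₁ one_pos (switchingSinhSq_pos hu₁ hu₂γ hγ).le
      ((sub_zero t₁).trans ht₁)
  obtain ⟨y₁, y₂, hy, hy₁_end, hy₂_end, hy₁_sq, hy₂_nonneg⟩ :=
    exists_isErmakovTrajectory_arriving hu₂ hγ₀ hu₂γ₄.le (switchingSinSq_pos hu₁ hu₂γ hγ).le
      (switchingSinSq_le_one hu₁ hu₂γ hγ) ((add_sub_cancel_left t₁ t₂).trans ht₂)
  rw [one_pow, mul_one, one_add_mul_switchingSinhSq hu₁ hu hγ₀.ne'] at hx₁_sq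
  rw [sq_sub_mul_switchingSinSq hu₂.ne' hu hγ₀.ne' (sub_pos.2 hu₂γ₄).ne'] at hy₁_sq
  have position_eq : x₁ t₁ = y₁ t₁ :=
    (sq_eq_sq₀ (hx.pos t₁ trivial).le (hy.pos t₁ trivial).le).1 (hx₁_sq.trans hy₁_sq.symm)
  have energy_departing := hx.energy_eq convex_univ (Set.mem_univ t₁) (Set.mem_univ 0)
  have energy_arriving := hy.energy_eq convex_univ (Set.mem_univ t₁) (Set.mem_univ (t₁ + t₂))
  rw [hx₁_start, hx₂_start] at energy_departing
  rw [hy₁_end, hy₂_end, ← position_eq] at energy_arriving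
  have velocity_eq : x₂ t₁ = y₂ t₁ :=
    eq_of_ermakovEnergy_eq hu hx₂_nonneg hy₂_nonneg hx₁_sq energy_departing energy_arriving
  simpa only [hx₁_start, hx₂_start, hy₁_end, hy₂_end] using
    (hx.mono (Set.subset_univ _)).exists_concat ht₁_pos.le (le_add_of_nonneg_right ht₂_pos.le)
      (hy.mono (Set.subset_univ _)) position_eq velocity_eq

end Switching

theorem one_switching_transfer_general
    (u₁ u₂ γ : ℝ) (hu₁ : 0 < u₁) (hu₂γ : 1 < u₂ * γ ^ 2) (hγ : 1 < γ)
    (t₁ t₂ : ℝ)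
    (ht₁ : t₁ = 1 / √u₁ * arsinh √(u₁ * (γ ^ 2 - 1) * (u₂ * γ ^ 2 - 1) /
      (γ ^ 2 * (u₁ + u₂) * (u₁ + 1))))
    (ht₂ : t₂ = 1 / √u₂ * arcsin √(u₂ * (γ ^ 2 - 1) * (u₁ * γ ^ 2 + 1) /
      ((u₁ + u₂) * (u₂ * γ ^ 4 - 1)))) :
    0 < t₁ ∧ 0 < t₂ ∧
    ∃ x₁ x₂ : ℝ → ℝ,
      ContinuousOn x₁ (Set.Icc 0 (t₁ + t₂)) ∧
      ContinuousOn x₂ (Set.Icc 0 (t₁ + t₂)) ∧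
      (∀ t ∈ Set.Icc 0 (t₁ + t₂), 0 < x₁ t) ∧
      x₁ 0 = 1 ∧ x₂ 0 = 0 ∧ x₁ (t₁ + t₂) = γ ∧ x₂ (t₁ + t₂) = 0 ∧
      (∀ t ∈ Set.Icc 0 (t₁ + t₂),
        HasDerivWithinAt x₁ (x₂ t) (Set.Icc 0 (t₁ + t₂)) t) ∧
      (∀ t ∈ Set.Icc 0 t₁,
        HasDerivWithinAt x₂ (u₁ * x₁ t + 1 / (x₁ t) ^ 3) (Set.Icc 0 t₁) t) ∧
      (∀ t ∈ Set.Icc t₁ (t₁ + t₂),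
        HasDerivWithinAt x₂ (-u₂ * x₁ t + 1 / (x₁ t) ^ 3)
          (Set.Icc t₁ (t₁ + t₂)) t) := by
  have ht₁_pos : 0 < t₁ := ht₁ ▸ departureTime_pos hu₁ hu₂γ hγ
  have ht₂_pos : 0 < t₂ := ht₂ ▸ arrivalTime_pos hu₁ hu₂γ hγ
  obtain ⟨x₁, x₂, h₁, h₂, hx₁_start, hx₂_start, hx₁_end, hx₂_end⟩ :=
    exists_isErmakovTrajectory_switching hu₁ hu₂γ hγ ht₁ ht₂
  have deriv_fst := hasDerivWithinAt_union_of_isClosed isClosed_Icc isClosed_Icc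
    h₁.hasDerivWithinAt_fst h₂.hasDerivWithinAt_fst
  have continuous_snd := h₁.continuousOn_snd_union isClosed_Icc isClosed_Icc h₂
  have pos_fst : ∀ t ∈ Set.Icc 0 t₁ ∪ Set.Icc t₁ (t₁ + t₂), 0 < x₁ t :=
    fun t ht ↦ ht.elim (h₁.pos t) (h₂.pos t)
  rw [Set.Icc_union_Icc_eq_Icc ht₁_pos.le (le_add_of_nonneg_right ht₂_pos.le)]
    at deriv_fst continuous_snd pos_fst
  exact ⟨ht₁_pos, ht₂_pos, x₁, x₂, fun t ht ↦ (deriv_fst t ht).continuousWithinAt, continuous_snd,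
    pos_fst, hx₁_start, hx₂_start, hx₁_end, hx₂_end, deriv_fst,
    by simpa only [neg_neg] using h₁.hasDerivWithinAt_snd, h₂.hasDerivWithinAt_snd⟩

/-- The bang-bang control taking the value `−u₁` on `[0, t₁]` and `u₂` on
`[t₁, t₁ + t₂]` (with `t₁, t₂` given by the explicit formulas below) transfers
the state `(1,0)` to `(γ,0)` in total time `T₀ = t₁ + t₂`: there is a
continuous, piecewise continuously differentiable trajectory `(x₁, x₂)`
staying in `{x₁ > 0}`, satisfying `ẋ₁ = x₂` throughout,
`ẋ₂ = u₁x₁ + 1/x₁³` on the first piece and `ẋ₂ = −u₂x₁ + 1/x₁³` on the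
second. -/
theorem one_switching_transfer
    (u₁ u₂ γ : ℝ) (hu₁ : 1 ≤ u₁) (hu₂ : 1 ≤ u₂) (hγ : 1 < γ)
    (t₁ t₂ : ℝ)
    (ht₁ : t₁ = (1 / Real.sqrt u₁) * Real.arsinh (Real.sqrt
      (u₁ * (γ ^ 2 - 1) * (u₂ * γ ^ 2 - 1) / (γ ^ 2 * (u₁ + u₂) * (u₁ + 1)))))
    (ht₂ : t₂ = (1 / Real.sqrt u₂) * Real.arcsin (Real.sqrt
      (u₂ * (γ ^ 2 - 1) * (u₁ * γ ^ 2 + 1) / ((u₁ + u₂) * (u₂ * γ ^ 4 - 1))))) :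
    0 < t₁ ∧ 0 < t₂ ∧
    ∃ x₁ x₂ : ℝ → ℝ,
      ContinuousOn x₁ (Set.Icc 0 (t₁ + t₂)) ∧
      ContinuousOn x₂ (Set.Icc 0 (t₁ + t₂)) ∧
      (∀ t ∈ Set.Icc 0 (t₁ + t₂), 0 < x₁ t) ∧
      x₁ 0 = 1 ∧ x₂ 0 = 0 ∧ x₁ (t₁ + t₂) = γ ∧ x₂ (t₁ + t₂) = 0 ∧
      (∀ t ∈ Set.Icc 0 (t₁ + t₂),
        HasDerivWithinAt x₁ (x₂ t) (Set.Icc 0 (t₁ + t₂)) t) ∧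
      (∀ t ∈ Set.Icc 0 t₁,
        HasDerivWithinAt x₂ (u₁ * x₁ t + 1 / (x₁ t) ^ 3) (Set.Icc 0 t₁) t) ∧
      (∀ t ∈ Set.Icc t₁ (t₁ + t₂),
        HasDerivWithinAt x₂ (-u₂ * x₁ t + 1 / (x₁ t) ^ 3)
          (Set.Icc t₁ (t₁ + t₂)) t) := by
  have hu₂γ : 1 < u₂ * γ ^ 2 := one_lt_mul_of_le_of_lt hu₂ (one_lt_pow₀ hγ two_ne_zero)
  exact one_switching_transfer_general u₁ u₂ γ (zero_lt_one.trans_le hu₁) hu₂γ hγ t₁ t₂ ht₁ ht₂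
end
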